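/- Let A be an n×n matrix with Re(A) := (A + A*)/2 positive semidefinite and 0 ∉ spec(A). Then dist(0, spec(A)) · ‖A⁻¹‖ ≤ cot(π/(4n)). -/

import Mathlib

/-!
Write `d` for the distance from `0` to the spectrum of `A`. The inverse `T = A⁻¹` is again accretive,
since the form of `T` at `x` is the conjugate of the form of `A` at `A⁻¹ x`, and its eigenvalues have
modulus at most `r = d⁻¹`.

In an orthonormal basis that makes `T` upper triangular (`exists_schur_basis`) the diagonal entries
are eigenvalues of `T`, so they have modulus at most `r`. Accretivity on the span of two basis
vectors then bounds the entry above the diagonal by the sum of the real parts of the two diagonal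
entries, hence by `2 r` (`norm_offdiag_le`). So `T` is dominated entrywise by `r` times the real
matrix `triQ` with `1` on the diagonal and `2` above it.

The norm of `triQ` is at most `cot θ`, `θ = π / (4 n)`, by the Schur test with the positive vectors
`v j = sin ((2 j + 1) θ)` and `u i = cos ((2 i + 1) θ)`, which satisfy `triQ v = cot θ • u` and
`triQᵀ u = cot θ • v` by telescoping trigonometric sums (`triQ_bound`).
-/

open Real
open scoped Matrix ComplexOrder

noncomputable def opN {n : ℕ} (A : Matrix (Fin n) (Fin n) ℂ) : ℝ :=
  ‖Matrix.toEuclideanCLM (𝕜 := ℂ) A‖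

/-- Entries of the upper triangular matrix with `1` on the diagonal and `2` above it. -/
noncomputable def triQ (i j : ℕ) : ℝ := if i < j then 2 else if i = j then 1 else 0

lemma triQ_nonneg (i j : ℕ) : 0 ≤ triQ i j := by
  unfold triQ; split_ifs <;> norm_num

/-- Row `i` of `triQ` applied to the sine vector. The term `cos (2 m θ)` vanishes at the full length
`m = n` when `θ = π / (4 n)`. -/
lemma sum_triQ_sin (θ : ℝ) (i m : ℕ) (h : i + 1 ≤ m) :
    sin θ * ∑ j ∈ Finset.range m, triQ i j * sin ((2 * j + 1) * θ)
      = cos θ * cos ((2 * i + 1) * θ) - cos (2 * m * θ) := by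
  induction m, h using Nat.le_induction with
  | base =>
    rw [Finset.sum_range_succ, Finset.sum_eq_zero]
    · have : (2 * ((i + 1 : ℕ) : ℝ) * θ) = (2 * i + 1) * θ + θ := by push_cast; ring
      rw [this, cos_add]
      simp only [triQ, lt_irrefl, if_false, if_true]
      ring
    · intro j hj
      have := Finset.mem_range.1 hj
      simp [triQ, show ¬ i < j by omega, show i ≠ j by omega]
  | succ m hm ih =>
    rw [Finset.sum_range_succ, mul_add, ih]
    have h1 : (2 * ((m + 1 : ℕ) : ℝ) * θ) = (2 * m + 1) * θ + θ := by push_cast; ring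
    have h2 : (2 * (m : ℝ) * θ) = (2 * m + 1) * θ - θ := by ring
    rw [h1, h2, cos_add, cos_sub]
    simp only [triQ, show i < m by omega, if_true]
    ring

lemma sum_two_cos (θ : ℝ) (m : ℕ) :
    sin θ * ∑ j ∈ Finset.range m, 2 * cos ((2 * j + 1) * θ) = sin (2 * m * θ) := by
  induction m with
  | zero => simp
  | succ m ih =>
    rw [Finset.sum_range_succ, mul_add, ih]
    have h1 : (2 * ((m + 1 : ℕ) : ℝ) * θ) = (2 * m + 1) * θ + θ := by push_cast; ring
    have h2 : (2 * (m : ℝ) * θ) = (2 * m + 1) * θ - θ := by ring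
    rw [h1, h2, sin_add, sin_sub]
    ring

/-- Column `j` of `triQ` applied to the cosine vector. -/
lemma sum_triQ_cos (θ : ℝ) (j m : ℕ) (h : j + 1 ≤ m) :
    sin θ * ∑ i ∈ Finset.range m, triQ i j * cos ((2 * i + 1) * θ)
      = cos θ * sin ((2 * j + 1) * θ) := by
  induction m, h using Nat.le_induction with
  | base =>
    rw [Finset.sum_range_succ, mul_add, Finset.sum_congr rfl (g := fun i : ℕ =>
      2 * cos ((2 * i + 1) * θ)), sum_two_cos]
    · have h2 : (2 * (j : ℝ) * θ) = (2 * j + 1) * θ - θ := by ring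
      rw [h2, sin_sub]
      simp only [triQ, lt_irrefl, if_false, if_true]
      ring
    · intro i hi
      simp [triQ, Finset.mem_range.1 hi]
  | succ m hm ih =>
    rw [Finset.sum_range_succ, mul_add, ih]
    simp [triQ, show ¬ m < j by omega, show m ≠ j by omega]

/-- The Schur test: a nonnegative kernel `Q` with weights `u` and `v > 0` satisfying `Q v = c u`
and `Qᵀ u = c v` has `ℓ²` operator norm at most `c`. -/
lemma schur_test {ι : Type*} [Fintype ι] (Q : ι → ι → ℝ) (hQ : ∀ i j, 0 ≤ Q i j) (u v : ι → ℝ)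
    (hv : ∀ i, 0 < v i) (c : ℝ)
    (h1 : ∀ i, ∑ j, Q i j * v j = c * u i) (h2 : ∀ j, ∑ i, Q i j * u i = c * v j) (y : ι → ℝ) :
    ∑ i, (∑ j, Q i j * y j) ^ 2 ≤ c ^ 2 * ∑ j, y j ^ 2 := by
  have key : ∀ i, (∑ j, Q i j * y j) ^ 2 ≤ (c * u i) * ∑ j, Q i j * (y j ^ 2 / v j) := by
    intro i
    rw [← h1]
    refine Finset.sum_sq_le_sum_mul_sum_of_sq_le_mul _
      (fun j _ => mul_nonneg (hQ i j) (hv j).le)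
      (fun j _ => mul_nonneg (hQ i j) (div_nonneg (sq_nonneg _) (hv j).le)) (fun j _ => ?_)
    have := (hv j).ne'
    refine le_of_eq ?_
    field_simp
  calc _ ≤ ∑ i, (c * u i) * ∑ j, Q i j * (y j ^ 2 / v j) := Finset.sum_le_sum fun i _ => key i
    _ = ∑ j, c * (∑ i, Q i j * u i) * (y j ^ 2 / v j) := by
      simp only [Finset.mul_sum, Finset.sum_mul]
      rw [Finset.sum_comm]
      refine Finset.sum_congr rfl fun j _ => Finset.sum_congr rfl fun i _ => by ring
    _ = _ := by
      rw [Finset.mul_sum]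
      refine Finset.sum_congr rfl fun j _ => ?_
      rw [h2]
      have := (hv j).ne'
      field_simp

/-- The matrix `triQ` of size `n` has `ℓ²` operator norm at most `cot (π / (4 n))`: the vectors
`sin ((2 j + 1) θ)` and `cos ((2 j + 1) θ)` with `θ = π / (4 n)` are singular vectors for the
singular value `cot θ`, and the sine vector is positive. -/
lemma triQ_bound {n : ℕ} (hn : 0 < n) (y : Fin n → ℝ) :
    ∑ i : Fin n, (∑ j : Fin n, triQ i j * y j) ^ 2 ≤ cot (π / (4 * n)) ^ 2 * ∑ j, y j ^ 2 := by
  set θ : ℝ := π / (4 * n) with hθ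
  have hn' : (0 : ℝ) < n := by exact_mod_cast hn
  have hθ0 : 0 < θ := by positivity
  have hnθ : 2 * n * θ = π / 2 := by rw [hθ]; field_simp; norm_num
  have hs : ∀ i : Fin n, 0 < sin ((2 * (i : ℕ) + 1) * θ) := by
    intro i
    have hi : ((i : ℕ) : ℝ) + 1 ≤ n := by exact_mod_cast i.2
    apply sin_pos_of_pos_of_lt_pi (by positivity)
    nlinarith [pi_pos]
  have hsin : 0 < sin θ := by simpa using hs ⟨0, hn⟩
  refine schur_test (fun i j : Fin n => triQ i j) (fun i j => triQ_nonneg _ _)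
    (fun i => cos ((2 * (i : ℕ) + 1) * θ)) (fun i => sin ((2 * (i : ℕ) + 1) * θ)) hs _ ?_ ?_ y
  · intro i
    rw [Fin.sum_univ_eq_sum_range (fun j : ℕ => triQ i j * sin ((2 * j + 1) * θ)) n]
    have := sum_triQ_sin θ i n i.2
    rw [hnθ, cos_pi_div_two, sub_zero] at this
    rw [cot_eq_cos_div_sin, div_mul_eq_mul_div, eq_div_iff hsin.ne']
    linarith
  · intro j
    rw [Fin.sum_univ_eq_sum_range (fun i : ℕ => triQ i j * cos ((2 * i + 1) * θ)) n]
    have := sum_triQ_cos θ j n j.2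
    rw [cot_eq_cos_div_sin, div_mul_eq_mul_div, eq_div_iff hsin.ne']
    linarith

/-- Schur triangularization by induction on the dimension: the last basis vector is an eigenvector of the adjoint, and the
others triangularize the compression to its orthogonal complement. -/
lemma exists_schur_basis (n : ℕ) : ∀ (E : Type) [NormedAddCommGroup E] [InnerProductSpace ℂ E]
    [FiniteDimensional ℂ E] (_ : Module.finrank ℂ E = n) (T : E →ₗ[ℂ] E),
    ∃ b : OrthonormalBasis (Fin n) ℂ E, ∀ i j, j < i → inner ℂ (b i) (T (b j)) = 0 := by
  induction n with
  | zero =>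
    intro E _ _ _ hE T
    exact ⟨(stdOrthonormalBasis ℂ E).reindex (finCongr hE), fun i => i.elim0⟩
  | succ n ih =>
    intro E _ _ _ hE T
    have : Nontrivial E := Module.nontrivial_of_finrank_pos (R := ℂ) (by omega)
    obtain ⟨μ, hμ⟩ := Module.End.exists_eigenvalue (LinearMap.adjoint T)
    obtain ⟨f₀, hf₀⟩ := hμ.exists_hasEigenvector
    have hf0 := hf₀.2
    have hTf₀ := hf₀.apply_eq_smul
    set f : E := ((‖f₀‖ : ℂ)⁻¹) • f₀ with hf
    have hfn : ‖f‖ = 1 := norm_smul_inv_norm hf0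
    have hTf : LinearMap.adjoint T f = μ • f := by
      rw [hf, map_smul, hTf₀, smul_comm]
    have hfne : f ≠ 0 := by intro h; simp [h] at hfn
    let W : Submodule ℂ E := (ℂ ∙ f)ᗮ
    have hW : Module.finrank ℂ W = n := by
      have : Fact (Module.finrank ℂ E = n + 1) := ⟨hE⟩
      exact Submodule.finrank_orthogonal_span_singleton hfne
    obtain ⟨b, hb⟩ := ih W hW
      ((LinearMap.adjoint W.subtype) ∘ₗ T ∘ₗ W.subtype)
    have hfb : ∀ i, inner ℂ f (b i : E) = 0 := fun i =>
      Submodule.mem_orthogonal_singleton_iff_inner_right.1 (b i).2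
    let w : Fin (n + 1) → E := Fin.snoc (fun i => (b i : E)) f
    have hw1 : ∀ i : Fin n, w i.castSucc = b i := fun i => by simp [w]
    have hw2 : w (Fin.last n) = f := by simp [w]
    have hw : Orthonormal ℂ w := by
      rw [orthonormal_iff_ite]
      intro i j
      refine Fin.lastCases ?_ (fun i => ?_) i <;> refine Fin.lastCases ?_ (fun j => ?_) j
      · simp [hw2, inner_self_eq_norm_sq_to_K, hfn]
      · simp [hw2, hw1, hfb, (Fin.castSucc_lt_last j).ne']
      · rw [hw2, hw1, ← inner_conj_symm, hfb]
        simp [(Fin.castSucc_lt_last i).ne]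
      · rw [hw1, hw1, ← Submodule.coe_inner, orthonormal_iff_ite.1 b.orthonormal]
        simp
    have hspan : ⊤ ≤ Submodule.span ℂ (Set.range w) :=
      (hw.linearIndependent.span_eq_top_of_card_eq_finrank' (by simp [hE])).ge
    refine ⟨OrthonormalBasis.mk hw hspan, fun i j hij => ?_⟩
    rw [OrthonormalBasis.coe_mk]
    obtain ⟨j, rfl⟩ := Fin.exists_castSucc_eq.2 (hij.trans_le (Fin.le_last i)).ne
    rw [hw1]
    refine Fin.lastCases (fun _ => ?_) (fun i hij => ?_) i hij
    · rw [hw2, ← LinearMap.adjoint_inner_left, hTf, inner_smul_left, hfb, mul_zero]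
    · rw [hw1]
      have := hb i j (Fin.castSucc_lt_castSucc_iff.1 hij)
      simpa [LinearMap.adjoint_inner_right] using this

/-- The diagonal entries of a triangularized operator are eigenvalues. -/
lemma diag_mem_spectrum {n : ℕ} {E : Type} [NormedAddCommGroup E] [InnerProductSpace ℂ E]
    [FiniteDimensional ℂ E] (T : E →ₗ[ℂ] E) (b : OrthonormalBasis (Fin n) ℂ E)
    (hb : ∀ i j, j < i → inner ℂ (b i) (T (b j)) = 0) (i : Fin n) :
    inner ℂ (b i) (T (b i)) ∈ spectrum ℂ T := by
  have hM : ∀ i j, LinearMap.toMatrix b.toBasis b.toBasis T i j = inner ℂ (b i) (T (b j)) := by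
    intro i j
    rw [LinearMap.toMatrix_apply]
    simp [OrthonormalBasis.repr_apply_apply]
  have htri : (LinearMap.toMatrix b.toBasis b.toBasis T).BlockTriangular id := by
    intro i j hij
    rw [hM]
    exact hb i j hij
  rw [← LinearMap.spectrum_toMatrix T b.toBasis, Matrix.mem_spectrum_iff_isRoot_charpoly,
    Matrix.charpoly_of_isUpperTriangular _ htri, Polynomial.IsRoot.def, Polynomial.eval_prod]
  exact Finset.prod_eq_zero (Finset.mem_univ i) (by simp [hM])

/-- Two diagonal entries of an accretive operator control the off-diagonal entry between them when
the opposite entry vanishes. -/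
lemma norm_offdiag_le {E : Type} [NormedAddCommGroup E] [InnerProductSpace ℂ E]
    (T : E →ₗ[ℂ] E) (hT : ∀ x, 0 ≤ (inner ℂ x (T x)).re) (e f : E)
    (h : inner ℂ f (T e) = 0) :
    ‖inner ℂ e (T f)‖ ≤ (inner ℂ e (T e)).re + (inner ℂ f (T f)).re := by
  set z := inner ℂ e (T f) with hz
  -- the phase `w` is chosen so that `w z = |z|`
  obtain ⟨w, hw, hwz⟩ : ∃ w : ℂ, ‖w‖ = 1 ∧ w * z = ‖z‖ := by
    by_cases h0 : z = 0
    · exact ⟨1, by simp, by simp [h0]⟩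
    · have hn : (‖z‖ : ℂ) ≠ 0 := by simpa using h0
      refine ⟨‖z‖ / z, by simp [h0], by field_simp⟩
  have key := hT (e - w • f)
  have hww : (starRingEnd ℂ) w * w = 1 := by
    rw [Complex.conj_mul', hw]; simp
  have hexp : inner ℂ (e - w • f) (T (e - w • f))
      = inner ℂ e (T e) + inner ℂ f (T f) - ‖z‖ := by
    rw [map_sub, map_smul, inner_sub_left, inner_sub_right, inner_sub_right, inner_smul_left,
      inner_smul_left, inner_smul_right, inner_smul_right, h, ← hz, hwz]
    linear_combination (inner ℂ f (T f)) * hww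
  rw [hexp] at key
  simp only [Complex.sub_re, Complex.add_re, Complex.ofReal_re] at key
  linarith

lemma cot_nonneg {n : ℕ} (hn : 0 < n) : 0 ≤ cot (π / (4 * n)) := by
  have hn' : (1 : ℝ) ≤ n := by exact_mod_cast hn
  have h1 : π / (4 * n) ≤ π / 2 := by
    apply div_le_div_of_nonneg_left pi_pos.le <;> linarith
  have h0 : 0 ≤ π / (4 * n) := by positivity
  rw [cot_eq_cos_div_sin]
  exact div_nonneg (cos_nonneg_of_neg_pi_div_two_le_of_le (by linarith [pi_pos]) h1)
    (sin_nonneg_of_nonneg_of_le_pi h0 (by linarith [pi_pos]))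

/-- An accretive operator on an `n`-dimensional space whose eigenvalues have modulus at most `r`
has norm at most `r cot (π / (4 n))`. -/
lemma norm_le_of_accretive {n : ℕ} (hn : 0 < n) {E : Type} [NormedAddCommGroup E]
    [InnerProductSpace ℂ E] [FiniteDimensional ℂ E] (hE : Module.finrank ℂ E = n)
    (T : E →ₗ[ℂ] E) (hT : ∀ x, 0 ≤ (inner ℂ x (T x)).re) (r : ℝ) (hr : 0 ≤ r)
    (hspec : ∀ μ ∈ spectrum ℂ T, ‖μ‖ ≤ r) (x : E) :
    ‖T x‖ ≤ r * cot (π / (4 * n)) * ‖x‖ := by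
  obtain ⟨b, hb⟩ := exists_schur_basis n E hE T
  have hd : ∀ i, ‖inner ℂ (b i) (T (b i))‖ ≤ r := fun i => hspec _ (diag_mem_spectrum T b hb i)
  have hentry : ∀ i j : Fin n, ‖inner ℂ (b i) (T (b j))‖ ≤ r * triQ i j := by
    intro i j
    rcases lt_trichotomy i j with hij | rfl | hij
    · have h1 := norm_offdiag_le T hT (b i) (b j) (hb j i hij)
      have h2 := (Complex.re_le_norm _).trans (hd i)
      have h3 := (Complex.re_le_norm _).trans (hd j)
      simp only [triQ, Fin.val_fin_lt, hij, if_true]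
      linarith
    · simpa [triQ] using hd i
    · rw [hb i j hij, norm_zero]
      exact mul_nonneg hr (triQ_nonneg _ _)
  have hcoef : ∀ i, ‖inner ℂ (b i) (T x)‖ ≤ r * ∑ j : Fin n, triQ i j * ‖inner ℂ (b j) x‖ := by
    intro i
    have hx : T x = ∑ j, inner ℂ (b j) x • T (b j) := by
      conv_lhs => rw [← b.sum_repr' x]
      simp
    rw [hx, inner_sum, Finset.mul_sum]
    refine norm_sum_le_of_le _ fun j _ => ?_
    rw [inner_smul_right, norm_mul]
    nlinarith [hentry i j, norm_nonneg (inner ℂ (b j) x)]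
  have hc := cot_nonneg hn
  refine (sq_le_sq₀ (norm_nonneg _) ?_).1 ?_
  · exact (mul_nonneg (mul_nonneg hr hc) (norm_nonneg x))
  calc ‖T x‖ ^ 2 = ∑ i, ‖inner ℂ (b i) (T x)‖ ^ 2 := (b.sum_sq_norm_inner_right _).symm
    _ ≤ ∑ i : Fin n, r ^ 2 * (∑ j : Fin n, triQ i j * ‖inner ℂ (b j) x‖) ^ 2 := by
      refine Finset.sum_le_sum fun i _ => ?_
      rw [← mul_pow]
      exact pow_le_pow_left₀ (norm_nonneg _) (hcoef i) 2
    _ ≤ r ^ 2 * (cot (π / (4 * n)) ^ 2 * ∑ j, ‖inner ℂ (b j) x‖ ^ 2) := by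
      rw [← Finset.mul_sum]
      exact mul_le_mul_of_nonneg_left (triQ_bound hn _) (sq_nonneg r)
    _ = _ := by rw [b.sum_sq_norm_inner_right]; ring

/-- The quadratic form of `A` has nonnegative real part when the Hermitian part of `A` is positive
semidefinite. -/
lemma re_inner_nonneg {n : ℕ} (A : Matrix (Fin n) (Fin n) ℂ)
    (hre : Matrix.PosSemidef ((2⁻¹ : ℂ) • (A + Aᴴ))) (y : Fin n → ℂ) :
    0 ≤ (star y ⬝ᵥ (A *ᵥ y)).re := by
  have h := hre.re_dotProduct_nonneg y
  have hstar : star y ⬝ᵥ (Aᴴ *ᵥ y) = star (star y ⬝ᵥ (A *ᵥ y)) := by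
    rw [Matrix.star_dotProduct, Matrix.star_mulVec, Matrix.conjTranspose_conjTranspose,
      Matrix.dotProduct_mulVec]
  rw [Matrix.smul_mulVec, Matrix.add_mulVec, dotProduct_smul, dotProduct_add, hstar] at h
  simpa using h

theorem stmt17 {n : ℕ} (hn : 0 < n) (A : Matrix (Fin n) (Fin n) ℂ)
    (hre : Matrix.PosSemidef ((2⁻¹ : ℂ) • (A + Aᴴ)))
    (h0 : (0 : ℂ) ∉ spectrum ℂ A) :
    Metric.infDist 0 (spectrum ℂ A) * opN A⁻¹ ≤ Real.cot (π / (4 * n)) := by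
  have : Nonempty (Fin n) := ⟨⟨0, hn⟩⟩
  have hu : IsUnit A := by simpa using spectrum.zero_notMem_iff ℂ |>.1 h0
  have hdet : IsUnit A.det := (Matrix.isUnit_iff_isUnit_det A).1 hu
  have hd : 0 < Metric.infDist 0 (spectrum ℂ A) := by
    refine ((Matrix.finite_spectrum A).isClosed.notMem_iff_infDist_pos ?_).1 h0
    exact spectrum.nonempty_of_isAlgClosed_of_finiteDimensional ℂ A
  set d := Metric.infDist 0 (spectrum ℂ A) with hd_def
  have hspec : ∀ μ ∈ spectrum ℂ (Matrix.toEuclideanLin A⁻¹), ‖μ‖ ≤ d⁻¹ := by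
    intro μ hμ
    rw [Matrix.spectrum_toLpLin] at hμ
    obtain ⟨a, rfl⟩ := hu
    rw [← Matrix.coe_units_inv] at hμ
    have hμ0 : μ ≠ 0 := spectrum.ne_zero_of_mem_of_unit hμ
    have hmem : μ⁻¹ ∈ spectrum ℂ (a : Matrix (Fin n) (Fin n) ℂ) := by
      have := (spectrum.inv_mem_iff (r := Units.mk0 μ hμ0) (a := a⁻¹)).1 hμ
      simpa using this
    have := Metric.infDist_le_dist_of_mem (x := (0 : ℂ)) hmem
    rw [dist_zero_left, norm_inv] at this
    rwa [le_inv_comm₀ (norm_pos_iff.2 hμ0) hd]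
  -- `A⁻¹` is accretive: evaluate the form of `A` at `A⁻¹ x` and conjugate
  have hacc : ∀ x, 0 ≤ (inner ℂ x (Matrix.toEuclideanLin A⁻¹ x)).re := by
    intro x
    have h := re_inner_nonneg A hre (A⁻¹ *ᵥ x.ofLp)
    rw [Matrix.mulVec_mulVec, Matrix.mul_nonsing_inv _ hdet, Matrix.one_mulVec] at h
    rw [← inner_conj_symm, Complex.conj_re, EuclideanSpace.inner_eq_star_dotProduct,
      dotProduct_comm]
    exact h
  have hb : opN A⁻¹ ≤ d⁻¹ * cot (π / (4 * n)) := by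
    have hbd := norm_le_of_accretive hn (by simp) _ hacc d⁻¹ (inv_nonneg.2 hd.le) hspec
    refine ContinuousLinearMap.opNorm_le_bound' _ ?_ fun x _ => ?_
    · exact mul_nonneg (inv_nonneg.2 hd.le) (cot_nonneg hn)
    · exact hbd x
  calc d * opN A⁻¹ ≤ d * (d⁻¹ * cot (π / (4 * n))) := mul_le_mul_of_nonneg_left hb hd.le
    _ = _ := by field_simp
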